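/- arXiv:cs/0309018 — 2 statements merged into one kernel-verified Lean document; each statement's English description precedes it below -/
import Mathlib

section
/- (Failure propagation, underlying Theorem 3.) Let L be a partial order with a least element ⊥ in which < is well-founded, and let f : ι → L → L be a family of operators each of which is monotone and contracting. Suppose there exists a fair schedule s such that the run x of f along s from x₀ attains ⊥, i.e., x k = ⊥ for some k. Then for every fair schedule s', the run x' of f along s' from x₀ stabilizes at ⊥: there exists N such that x' n = ⊥ for all n ≥ N. -/
/-!
A fair run eventually drops below every term of any other run from the same start: once it is
below `x k`, wait until its schedule selects the operator that produced `x (k + 1)`; monotonicity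
carries the inequality through that step, and contraction preserves it from then on.
-/

open Filter

/-- A schedule of operator activations is fair if it selects every index infinitely often. -/
def IsFairSchedule {ι : Type*} (s : ℕ → ι) : Prop :=
  ∀ i, ∃ᶠ n in atTop, s n = i

/-- `x` is a run of the operators `f` along the schedule `s`. The start of the run is not
prescribed: it is `x 0`. -/
def IsScheduleRun {ι L : Type*} (f : ι → L → L) (s : ℕ → ι) (x : ℕ → L) : Prop :=
  ∀ n, x (n + 1) = f (s n) (x n)

namespace IsScheduleRun

variable {ι L : Type*} [Preorder L] {f : ι → L → L} {s s' : ℕ → ι} {x x' : ℕ → L}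

theorem antitone (hx : IsScheduleRun f s x) (hcontract : ∀ i y, f i y ≤ y) : Antitone x :=
  antitone_nat_of_succ_le fun n => (hx n).trans_le (hcontract (s n) (x n))

theorem succ_le_succ (hx : IsScheduleRun f s x) (hx' : IsScheduleRun f s' x')
    (hmono : ∀ i, Monotone (f i)) {n k : ℕ} (hsched : s' n = s k) (hle : x' n ≤ x k) :
    x' (n + 1) ≤ x (k + 1) := by
  rw [hx', hx, hsched]
  exact hmono (s k) hle

theorem eventually_le (hx : IsScheduleRun f s x) (hx' : IsScheduleRun f s' x')
    (hmono : ∀ i, Monotone (f i)) (hcontract : ∀ i y, f i y ≤ y)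
    (hfair : IsFairSchedule s') (hstart : x' 0 ≤ x 0) (k : ℕ) :
    ∀ᶠ n in atTop, x' n ≤ x k := by
  have hanti : Antitone x' := hx'.antitone hcontract
  induction k with
  | zero => exact .of_forall fun n => (hanti n.zero_le).trans hstart
  | succ k ih =>
    obtain ⟨n, hsched, hle⟩ := ((hfair (s k)).and_eventually ih).exists
    have hnext : x' (n + 1) ≤ x (k + 1) := hx.succ_le_succ hx' hmono hsched hle
    filter_upwards [eventually_ge_atTop (n + 1)] with m hm
    exact (hanti hm).trans hnext

end IsScheduleRun

theorem failure_propagation_general {ι L : Type*} [PartialOrder L] [OrderBot L]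
    {f : ι → L → L} (hmono : ∀ i, Monotone (f i)) (hcontract : ∀ i y, f i y ≤ y)
    {s s' : ℕ → ι} {x x' : ℕ → L} (hx : IsScheduleRun f s x) (hx' : IsScheduleRun f s' x')
    (hfair : IsFairSchedule s') (hstart : x' 0 ≤ x 0) (hfail : ∃ k, x k = ⊥) :
    ∀ᶠ n in atTop, x' n = ⊥ := by
  obtain ⟨k, hk⟩ := hfail
  exact (hx.eventually_le hx' hmono hcontract hfair hstart k).mono fun _ hle =>
    le_bot_iff.mp (hle.trans_eq hk)

/-- Failure propagation: if one fair run of a monotone contracting family from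
`x₀` attains `⊥`, then every fair run from `x₀` stabilizes at `⊥`. -/
theorem failure_propagation {L : Type*} [PartialOrder L] [OrderBot L] {ι : Type*}
    (hwf : WellFounded ((· < ·) : L → L → Prop))
    (f : ι → L → L) (hmono : ∀ i, Monotone (f i))
    (hcontract : ∀ i, ∀ y : L, f i y ≤ y)
    (x₀ : L)
    (hfail : ∃ (s : ℕ → ι) (x : ℕ → L),
      (∀ i : ι, ∀ N : ℕ, ∃ n : ℕ, N ≤ n ∧ s n = i) ∧
      x 0 = x₀ ∧ (∀ n, x (n + 1) = f (s n) (x n)) ∧ ∃ k : ℕ, x k = ⊥) :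
    ∀ (s' : ℕ → ι) (x' : ℕ → L),
      (∀ i : ι, ∀ N : ℕ, ∃ n : ℕ, N ≤ n ∧ s' n = i) →
      x' 0 = x₀ → (∀ n, x' (n + 1) = f (s' n) (x' n)) →
      ∃ N : ℕ, ∀ n : ℕ, N ≤ n → x' n = ⊥ := by
  obtain ⟨s, x, -, hx0, hx, hbot⟩ := hfail
  exact fun s' x' hfair hx0' hx' => eventually_atTop.mp <|
    failure_propagation_general hmono hcontract hx hx' (fun i => frequently_atTop.mpr (hfair i))
      (hx0'.trans hx0.symm).le hbot
end

section
/- (Order-theoretic form of Theorem 4.) Let L be a partial order in which < is well-founded, and let f : ι → L → L be a family of operators each of which is monotone and contracting (f i y ≤ y for all y). Let s be a fair schedule with f (s 0) x₀ = x₀, let x be the run of f along s from x₀, and let x' be the run of f along the shifted schedule fun n => s (n + 1) from x₀. Then both runs stabilize and have the same limit: there exist N and M such that x n = x N for all n ≥ N, x' n = x' M for all n ≥ M, and x N = x' M. -/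
/-! If the head of the schedule does nothing, then the original run, read from its second term on,
starts again at `x₀` and obeys the recursion of the shifted schedule. A run is determined by its
schedule and its start, so the shifted run is the original one moved by one index. The original run
is antitone, so the descending chain condition makes it stabilize, and the shifted run with it. -/

/-- `x` is the run of the family of operators `f` along the schedule `s` from `x₀`. Being a relation
rather than a recursively defined sequence, it applies to any sequence satisfying the recursion. -/
structure IsRun {α ι : Type*} (f : ι → α → α) (s : ℕ → ι) (x₀ : α) (x : ℕ → α) : Prop where
  zero : x 0 = x₀
  succ : ∀ n, x (n + 1) = f (s n) (x n)

namespace IsRun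

variable {α ι : Type*} {f : ι → α → α} {s : ℕ → ι} {x₀ : α} {x y : ℕ → α}

theorem unique (hx : IsRun f s x₀ x) (hy : IsRun f s x₀ y) : x = y := by
  funext n
  induction n with
  | zero => rw [hx.zero, hy.zero]
  | succ n ih => rw [hx.succ, hy.succ, ih]

theorem tail (hx : IsRun f s x₀ x) :
    IsRun f (fun n => s (n + 1)) (f (s 0) x₀) (fun n => x (n + 1)) where
  zero := by rw [hx.succ, hx.zero]
  succ n := hx.succ (n + 1)

theorem eq_tail_of_noop_head (hnoop : f (s 0) x₀ = x₀) (hx : IsRun f s x₀ x)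
    (hy : IsRun f (fun n => s (n + 1)) x₀ y) : y = fun n => x (n + 1) :=
  hy.unique (by simpa only [hnoop] using hx.tail)

theorem antitone [Preorder α] (hcontract : ∀ i y, f i y ≤ y) (hx : IsRun f s x₀ x) :
    Antitone x :=
  antitone_nat_of_succ_le fun n => (hx.succ n).trans_le (hcontract (s n) (x n))

end IsRun

theorem remove_noop_head_general {L ι : Type*} [PartialOrder L] [WellFoundedLT L]
    {f : ι → L → L} (hcontract : ∀ i y, f i y ≤ y) {s : ℕ → ι} {x₀ : L}
    (hnoop : f (s 0) x₀ = x₀) {x x' : ℕ → L} (hx : IsRun f s x₀ x)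
    (hx' : IsRun f (fun n => s (n + 1)) x₀ x') :
    ∃ N M : ℕ,
      (∀ n : ℕ, N ≤ n → x n = x N) ∧
      (∀ n : ℕ, M ≤ n → x' n = x' M) ∧
      x N = x' M := by
  obtain rfl : x' = fun n => x (n + 1) := hx.eq_tail_of_noop_head hnoop hx'
  obtain ⟨N, hN⟩ := WellFoundedLT.antitone_chain_condition (hx.antitone hcontract)
  have hN' : ∀ n, N ≤ n → x N = x (n + 1) := fun n hn => hN (n + 1) (Nat.le_succ_of_le hn)
  exact ⟨N, N, fun n hn => (hN n hn).symm, fun n hn => (hN' n hn).symm.trans (hN' N le_rfl),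
    hN' N le_rfl⟩

/-- Order-theoretic form of Theorem 4: if the first operator of a fair
schedule is a no-op at the start `x₀`, then the run along the schedule and the
run along the schedule with its first element removed both stabilize and have
the same limit. -/
theorem remove_noop_head {L : Type*} [PartialOrder L] {ι : Type*}
    (hwf : WellFounded ((· < ·) : L → L → Prop))
    (f : ι → L → L) (hmono : ∀ i, Monotone (f i))
    (hcontract : ∀ i, ∀ y : L, f i y ≤ y)
    (s : ℕ → ι) (hfair : ∀ i : ι, ∀ N : ℕ, ∃ n : ℕ, N ≤ n ∧ s n = i)
    (x₀ : L) (hnoop : f (s 0) x₀ = x₀)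
    (x x' : ℕ → L)
    (hx0 : x 0 = x₀) (hxs : ∀ n, x (n + 1) = f (s n) (x n))
    (hx'0 : x' 0 = x₀) (hx's : ∀ n, x' (n + 1) = f (s (n + 1)) (x' n)) :
    ∃ N M : ℕ,
      (∀ n : ℕ, N ≤ n → x n = x N) ∧
      (∀ n : ℕ, M ≤ n → x' n = x' M) ∧
      x N = x' M := by
  have : WellFoundedLT L := ⟨hwf⟩
  exact remove_noop_head_general hcontract hnoop ⟨hx0, hxs⟩ ⟨hx'0, hx's⟩
end
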